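/- arXiv:2206.09908 — 2 statements merged into one kernel-verified Lean document; each statement's English description precedes it below -/
import Mathlib

section
/- Reparameterization invariance of NEIS (Proposition 2.2). Let b be an admissible vector field with global flow X and Jacobian factor J^b, let α : ℝ^d → ℝ be continuously differentiable with inf_x α(x) > 0, suppose α·b is admissible with global flow Y and Jacobian factor J^{αb}, and let U0, U1 : ℝ^d → ℝ be continuous. Then: (i) b and α·b generate the same flowlines, i.e. for every x ∈ ℝ^d the orbits coincide as sets: { Y t x : t ∈ ℝ } = { X t x : t ∈ ℝ }; and (ii) for every x ∈ ℝ^d such that ∫_ℝ exp(−U0(X t x)) · J^b t x dt is finite and strictly positive and ∫_ℝ exp(−U1(X t x)) · J^b t x dt is finite, the infinite-time NEIS estimators agree: (∫_ℝ exp(−U1(Y t x)) · J^{αb} t x dt) / (∫_ℝ exp(−U0(Y t x)) · J^{αb} t x dt) = (∫_ℝ exp(−U1(X t x)) · J^b t x dt) / (∫_ℝ exp(−U0(X t x)) · J^b t x dt). -/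
/-!
Fix a starting point `x` and let `θ t = ∫₀ᵗ α (Y s x) ds`. Since `θ' = α (Y t x) ≥ c > 0`, `θ` is an
increasing diffeomorphism of `ℝ`, and `s ↦ Y (θ⁻¹ s) x` solves the same initial value problem as
`s ↦ X s x`. As `b` is Lipschitz, uniqueness gives `Y t x = X (θ t) x`, hence equality of orbits
(`exists_timeChange`).

By the product rule `div (α b) = α div b + Dα(b)`, and along `Y` the second term is the derivative of
`log α (Y t x)`. Integrating, `J^{αb} t x = J^b (θ t) x · θ' t / α x` (`jac_timeChange`). The
substitution `s = θ t` then turns every integral along `Y` into the corresponding one along `X` times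
`1 / α x` (`integral_timeChange`), and this factor cancels in the quotient.
-/

open MeasureTheory Filter

noncomputable section

/-- Euclidean state space ℝ^d. -/
abbrev Euc (d : ℕ) := EuclideanSpace ℝ (Fin d)

/-- Divergence of a vector field: trace of the Fréchet derivative. -/
def vdiv {d : ℕ} (b : Euc d → Euc d) (x : Euc d) : ℝ :=
  LinearMap.trace ℝ (Euc d) (fderiv ℝ b x).toLinearMap

/-- A vector field is admissible if it is C¹ with globally bounded derivative. -/
def Admissible {d : ℕ} (b : Euc d → Euc d) : Prop :=
  ContDiff ℝ 1 b ∧ ∃ C : ℝ, ∀ x, ‖fderiv ℝ b x‖ ≤ C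

/-- A global flow of the vector field `b`. -/
def IsGlobalFlow {d : ℕ} (b : Euc d → Euc d) (X : ℝ → Euc d → Euc d) : Prop :=
  (∀ x, X 0 x = x) ∧
  (∀ t s : ℝ, ∀ x, X (t + s) x = X t (X s x)) ∧
  (∀ x : Euc d, ∀ t : ℝ, HasDerivAt (fun τ => X τ x) (b (X t x)) t)

/-- Jacobian factor of the flow: J t x = exp(∫₀ᵗ div b(X s x) ds). -/
def Jac {d : ℕ} (b : Euc d → Euc d) (X : ℝ → Euc d → Euc d) (t : ℝ) (x : Euc d) : ℝ :=
  Real.exp (∫ s in (0:ℝ)..t, vdiv b (X s x))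

lemma Admissible.exists_lipschitzWith {d : ℕ} {b : Euc d → Euc d} (hb : Admissible b) :
    ∃ K, LipschitzWith K b := by
  obtain ⟨hb1, C, hC⟩ := hb
  refine ⟨C.toNNReal, lipschitzWith_of_nnnorm_fderiv_le (𝕜 := ℝ)
    (hb1.differentiable (by norm_num)) fun x => ?_⟩
  rw [← NNReal.coe_le_coe, coe_nnnorm]
  exact (hC x).trans (Real.le_coe_toNNReal C)

lemma IsGlobalFlow.continuous {d : ℕ} {b : Euc d → Euc d} {X : ℝ → Euc d → Euc d}
    (hX : IsGlobalFlow b X) (x : Euc d) : Continuous fun t => X t x :=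
  continuous_iff_continuousAt.2 fun t => (hX.2.2 x t).continuousAt

lemma continuous_vdiv {d : ℕ} {b : Euc d → Euc d} (hb : ContDiff ℝ 1 b) :
    Continuous (vdiv b) := by
  have h : Continuous fun L : Euc d →L[ℝ] Euc d => LinearMap.trace ℝ (Euc d) L.toLinearMap :=
    LinearMap.continuous_of_finiteDimensional
      ((LinearMap.trace ℝ (Euc d)).comp (ContinuousLinearMap.coeLM ℝ))
  exact h.comp (hb.continuous_fderiv (by norm_num))

lemma vdiv_smul {d : ℕ} {b : Euc d → Euc d} {α : Euc d → ℝ} {x : Euc d}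
    (hα : DifferentiableAt ℝ α x) (hb : DifferentiableAt ℝ b x) :
    vdiv (fun y => α y • b y) x = α x * vdiv b x + fderiv ℝ α x (b x) := by
  have h : ((fderiv ℝ α x).smulRight (b x)).toLinearMap
      = (fderiv ℝ α x).toLinearMap.smulRight (b x) := rfl
  rw [vdiv, fderiv_fun_smul hα hb, ContinuousLinearMap.toLinearMap_add, map_add,
    ContinuousLinearMap.toLinearMap_smul, map_smul, h, LinearMap.trace_smulRight]
  rfl

/-- A function on the line whose derivative is bounded below by a positive constant is an
increasing bijection. -/
lemma strictMono_surjective_of_le_deriv {θ θ' : ℝ → ℝ} {c : ℝ} (hc : 0 < c)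
    (hθ : ∀ t, HasDerivAt θ (θ' t) t) (hle : ∀ t, c ≤ θ' t) :
    StrictMono θ ∧ Function.Surjective θ := by
  have hmono : Monotone fun t => θ t - c * t := by
    have hd : ∀ t, HasDerivAt (fun t => θ t - c * t) (θ' t - c * 1) t := fun t =>
      (hθ t).sub ((hasDerivAt_id t).const_mul c)
    refine monotone_of_deriv_nonneg (fun t => (hd t).differentiableAt) fun t => ?_
    rw [(hd t).deriv]
    linarith [hle t]
  refine ⟨strictMono_of_deriv_pos fun t => (hθ t).deriv ▸ hc.trans_le (hle t), ?_⟩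
  refine Continuous.surjective (continuous_iff_continuousAt.2 fun t => (hθ t).continuousAt) ?_ ?_
  · refine tendsto_atTop_mono' atTop ?_
      (tendsto_atTop_add_const_left atTop (θ 0) (tendsto_id.const_mul_atTop hc))
    filter_upwards [eventually_ge_atTop 0] with t ht
    have := hmono ht
    simp only [id] at this ⊢
    linarith
  · refine tendsto_atBot_mono' atBot ?_
      (tendsto_atBot_add_const_left atBot (θ 0) (tendsto_id.const_mul_atBot hc))
    filter_upwards [eventually_le_atBot 0] with t ht
    have := hmono ht
    simp only [id] at this ⊢
    linarith

/-- Along each orbit, the flow of `α • b` is a time change of the flow of `b`, with clock rate `α`. -/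
lemma exists_timeChange {d : ℕ} {b : Euc d → Euc d} (hb : Admissible b)
    {X : ℝ → Euc d → Euc d} (hX : IsGlobalFlow b X) {α : Euc d → ℝ} (hα : Continuous α)
    {c : ℝ} (hc : 0 < c) (hcα : ∀ x, c ≤ α x)
    {Y : ℝ → Euc d → Euc d} (hY : IsGlobalFlow (fun y => α y • b y) Y) (x : Euc d) :
    ∃ θ : ℝ → ℝ, θ 0 = 0 ∧ (∀ t, HasDerivAt θ (α (Y t x)) t) ∧ Function.Bijective θ ∧
      ∀ t, Y t x = X (θ t) x := by
  set θ : ℝ → ℝ := fun t => ∫ s in (0:ℝ)..t, α (Y s x)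
  have hθ0 : θ 0 = 0 := intervalIntegral.integral_same
  have hθ : ∀ t, HasDerivAt θ (α (Y t x)) t := fun t =>
    ((hα.comp (hY.continuous x)).integral_hasStrictDerivAt 0 t).hasDerivAt
  obtain ⟨hmono, hsurj⟩ := strictMono_surjective_of_le_deriv hc hθ fun t => hcα _
  refine ⟨θ, hθ0, hθ, ⟨hmono.injective, hsurj⟩, ?_⟩
  let e := hmono.orderIsoOfSurjective θ hsurj
  have hr : ∀ s, θ (e.symm s) = s := e.apply_symm_apply
  have hl : ∀ t, e.symm (θ t) = t := e.symm_apply_apply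
  have he : ∀ s, HasDerivAt e.symm (α (Y (e.symm s) x))⁻¹ s := fun s =>
    HasDerivAt.of_local_left_inverse e.symm.continuous.continuousAt (hθ _)
      (hc.trans_le (hcα _)).ne' (Eventually.of_forall hr)
  have hW : ∀ s, HasDerivAt (fun s => Y (e.symm s) x) (b (Y (e.symm s) x)) s := fun s => by
    have h := (hY.2.2 x (e.symm s)).scomp s (he s)
    rwa [smul_smul, inv_mul_cancel₀ (hc.trans_le (hcα _)).ne', one_smul] at h
  obtain ⟨K, hK⟩ := hb.exists_lipschitzWith
  have huniq : (fun s => Y (e.symm s) x) = fun s => X s x := by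
    refine ODE_solution_unique_univ (v := fun _ => b) (s := fun _ => Set.univ) (t₀ := 0) (K := K)
      (fun _ => hK.lipschitzOnWith) (fun s => ⟨hW s, trivial⟩)
      (fun s => ⟨hX.2.2 x s, trivial⟩) ?_
    have h0 : e.symm 0 = 0 := by simpa only [hθ0] using hl 0
    simp only [h0, hX.1, hY.1]
  intro t
  simpa only [hl] using congrFun huniq (θ t)

/-- Both sides have the same logarithmic derivative in `t`, by the product rule for the divergence,
and agree at `t = 0`. -/
lemma jac_timeChange {d : ℕ} {b : Euc d → Euc d} (hb : ContDiff ℝ 1 b)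
    {X : ℝ → Euc d → Euc d} (hX : IsGlobalFlow b X) {α : Euc d → ℝ} (hα : ContDiff ℝ 1 α)
    (hpos : ∀ x, 0 < α x)
    {Y : ℝ → Euc d → Euc d} (hY : IsGlobalFlow (fun y => α y • b y) Y) (x : Euc d)
    {θ : ℝ → ℝ} (hθ0 : θ 0 = 0) (hθ : ∀ t, HasDerivAt θ (α (Y t x)) t)
    (hYX : ∀ t, Y t x = X (θ t) x) (t : ℝ) :
    Jac (fun y => α y • b y) Y t x = Jac b X (θ t) x * (α (Y t x) / α x) := by
  have hαd := hα.differentiable (by norm_num)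
  have hbd := hb.differentiable (by norm_num)
  let g : ℝ → ℝ := fun t => (∫ s in (0:ℝ)..t, vdiv (fun y => α y • b y) (Y s x)) -
    ((∫ s in (0:ℝ)..θ t, vdiv b (X s x)) + Real.log (α (Y t x)))
  have hg : ∀ t, HasDerivAt g 0 t := fun t => by
    have hab : ContDiff ℝ 1 fun y => α y • b y := hα.smul hb
    have h1 := (((continuous_vdiv hab).comp (hY.continuous x)).integral_hasStrictDerivAt
      0 t).hasDerivAt
    have h2 := (((continuous_vdiv hb).comp (hX.continuous x)).integral_hasStrictDerivAt
      0 (θ t)).hasDerivAt.comp t (hθ t)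
    have h3 := ((hαd (Y t x)).hasFDerivAt.comp_hasDerivAt t (hY.2.2 x t)).log (hpos _).ne'
    refine (h1.sub (h2.add h3)).congr_deriv ?_
    have hne := (hpos (Y t x)).ne'
    simp only [Function.comp_apply, vdiv_smul (hαd _) (hbd _), ← hYX, map_smul, smul_eq_mul]
    field_simp
    ring
  have hconst : g t = g 0 := is_const_of_deriv_eq_zero (fun t => (hg t).differentiableAt)
    (fun t => (hg t).deriv) t 0
  simp only [g, hθ0, intervalIntegral.integral_same, hY.1] at hconst
  rw [Jac, Jac, ← Real.exp_log (hpos (Y t x)), ← Real.exp_log (hpos x), ← Real.exp_sub,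
    ← Real.exp_add]
  congr 1
  linarith

/-- The substitution `s = θ t`. If one integrand is not integrable then neither is the other, and both
sides are zero. -/
lemma integral_timeChange {d : ℕ} {b : Euc d → Euc d} {X Y : ℝ → Euc d → Euc d}
    {α : Euc d → ℝ} (hpos : ∀ x, 0 < α x) (x : Euc d)
    {θ : ℝ → ℝ} (hθ : ∀ t, HasDerivAt θ (α (Y t x)) t) (hbij : Function.Bijective θ)
    (hYX : ∀ t, Y t x = X (θ t) x)
    (hJ : ∀ t, Jac (fun y => α y • b y) Y t x = Jac b X (θ t) x * (α (Y t x) / α x))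
    (U : Euc d → ℝ) :
    ∫ t : ℝ, Real.exp (-(U (Y t x))) * Jac (fun y => α y • b y) Y t x =
      (α x)⁻¹ * ∫ t : ℝ, Real.exp (-(U (X t x))) * Jac b X t x := by
  have h := integral_image_eq_integral_abs_deriv_smul MeasurableSet.univ
    (fun t _ => (hθ t).hasDerivWithinAt) hbij.injective.injOn
    (fun s => Real.exp (-(U (X s x))) * Jac b X s x)
  rw [Set.image_univ, hbij.surjective.range_eq, setIntegral_univ, setIntegral_univ] at h
  rw [h, ← integral_const_mul]
  refine integral_congr_ae (Eventually.of_forall fun t => ?_)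
  simp only [hJ, ← hYX, abs_of_pos (hpos _), smul_eq_mul]
  field_simp

/-- Reparameterization invariance of NEIS (Proposition 2.2). -/
theorem stmt_5 {d : ℕ} (hd : 0 < d)
    (b : Euc d → Euc d) (hb : Admissible b)
    (X : ℝ → Euc d → Euc d) (hX : IsGlobalFlow b X)
    (α : Euc d → ℝ) (hα : ContDiff ℝ 1 α)
    (hαpos : ∃ c : ℝ, 0 < c ∧ ∀ x, c ≤ α x)
    (hab : Admissible (fun y => α y • b y))
    (Y : ℝ → Euc d → Euc d) (hY : IsGlobalFlow (fun y => α y • b y) Y)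
    (U0 U1 : Euc d → ℝ) (hU0c : Continuous U0) (hU1c : Continuous U1) :
    (∀ x : Euc d, Set.range (fun t : ℝ => Y t x) = Set.range (fun t : ℝ => X t x)) ∧
    ∀ x : Euc d,
      Integrable (fun t : ℝ => Real.exp (-(U0 (X t x))) * Jac b X t x) →
      0 < (∫ t : ℝ, Real.exp (-(U0 (X t x))) * Jac b X t x) →
      Integrable (fun t : ℝ => Real.exp (-(U1 (X t x))) * Jac b X t x) →
      (∫ t : ℝ, Real.exp (-(U1 (Y t x))) * Jac (fun y => α y • b y) Y t x) /
          (∫ t : ℝ, Real.exp (-(U0 (Y t x))) * Jac (fun y => α y • b y) Y t x) =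
        (∫ t : ℝ, Real.exp (-(U1 (X t x))) * Jac b X t x) /
          (∫ t : ℝ, Real.exp (-(U0 (X t x))) * Jac b X t x) := by
  obtain ⟨c, hc, hcα⟩ := hαpos
  have hpos : ∀ x, 0 < α x := fun x => hc.trans_le (hcα x)
  refine ⟨fun x => ?_, fun x _ _ _ => ?_⟩
  · obtain ⟨θ, -, -, hbij, hYX⟩ := exists_timeChange hb hX hα.continuous hc hcα hY x
    simp only [hYX]
    exact hbij.surjective.range_comp fun s => X s x
  · obtain ⟨θ, hθ0, hθ, hbij, hYX⟩ := exists_timeChange hb hX hα.continuous hc hcα hY x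
    have hJ := jac_timeChange hb.1 hX hα hpos hY x hθ0 hθ hYX
    rw [integral_timeChange hpos x hθ hbij hYX hJ, integral_timeChange hpos x hθ hbij hYX hJ]
    exact mul_div_mul_left _ _ (inv_ne_zero (hpos x).ne')
end
end

section
/- Invariance of the NEIS denominator under pushforward of the base potential along the flow (Lemma E.3). Let b be an admissible vector field with global flow X and Jacobian factor J, let U0 : ℝ^d → ℝ be continuous, and fix τ ∈ ℝ. Define U^τ : ℝ^d → ℝ by U^τ(x) := U0(X (−τ) x) − log(J (−τ) x). Then for every x ∈ ℝ^d, with both sides interpreted as Lebesgue integrals of nonnegative functions (values in [0,∞]): ∫_ℝ exp(−U^τ(X t x)) · J t x dt = ∫_ℝ exp(−U0(X t x)) · J t x dt. -/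
/-!
The Jacobian factor is a cocycle over the flow, `J (t + s) x = J t x * J s (X t x)`
(`jac_add`), because the divergence along an orbit is continuous in time and the orbit of `X t x`
is the orbit of `x` shifted by `t`. With `s = -τ` this turns the integrand on the left at time `t`
into the integrand on the right at time `t - τ`, and Lebesgue measure on `ℝ` is translation
invariant.
-/

open MeasureTheory Filter

noncomputable section

theorem continuous_vdiv_flow {d : ℕ} {b : Euc d → Euc d} (hb : Admissible b)
    {X : ℝ → Euc d → Euc d} (hX : IsGlobalFlow b X) (x : Euc d) :
    Continuous fun s => vdiv b (X s x) := by
  have hXc : Continuous fun s => X s x :=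
    continuous_iff_continuousAt.2 fun t => (hX.2.2 x t).continuousAt
  have hD : Continuous (fderiv ℝ b) := hb.1.continuous_fderiv one_ne_zero
  -- The trace is a linear functional on the finite-dimensional space of operators.
  have htr : Continuous
      ((LinearMap.trace ℝ (Euc d)) ∘ₗ (ContinuousLinearMap.coeLM ℝ :
        (Euc d →L[ℝ] Euc d) →ₗ[ℝ] (Euc d →ₗ[ℝ] Euc d))) :=
    LinearMap.continuous_of_finiteDimensional _
  exact htr.comp (hD.comp hXc)

/-- Cocycle property of the Jacobian factor along the flow. -/
theorem jac_add {d : ℕ} {b : Euc d → Euc d} (hb : Admissible b)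
    {X : ℝ → Euc d → Euc d} (hX : IsGlobalFlow b X) (t s : ℝ) (x : Euc d) :
    Jac b X (t + s) x = Jac b X t x * Jac b X s (X t x) := by
  have hc := continuous_vdiv_flow hb hX x
  have hshift : (∫ r in (0 : ℝ)..s, vdiv b (X r (X t x))) =
      ∫ r in t..(t + s), vdiv b (X r x) := by
    simp_rw [← hX.2.1]
    rw [intervalIntegral.integral_comp_add_right (fun r => vdiv b (X r x)) t, zero_add,
      add_comm s t]
  rw [Jac, Jac, Jac, hshift, ← Real.exp_add,
    intervalIntegral.integral_add_adjacent_intervals (hc.intervalIntegrable _ _)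
      (hc.intervalIntegrable _ _)]

/-- Invariance of the NEIS denominator under pushforward of the base potential
along the flow (Lemma E.3). -/
theorem stmt_11 {d : ℕ} (hd : 0 < d)
    (b : Euc d → Euc d) (hb : Admissible b)
    (X : ℝ → Euc d → Euc d) (hX : IsGlobalFlow b X)
    (U0 : Euc d → ℝ) (hU0c : Continuous U0) (τ : ℝ)
    (Uτ : Euc d → ℝ)
    (hUτ : ∀ x, Uτ x = U0 (X (-τ) x) - Real.log (Jac b X (-τ) x)) :
    ∀ x : Euc d,
      (∫⁻ t : ℝ, ENNReal.ofReal (Real.exp (-(Uτ (X t x))) * Jac b X t x)) =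
        ∫⁻ t : ℝ, ENNReal.ofReal (Real.exp (-(U0 (X t x))) * Jac b X t x) := by
  intro x
  have key : ∀ t, Real.exp (-(Uτ (X t x))) * Jac b X t x =
      Real.exp (-(U0 (X (t + -τ) x))) * Jac b X (t + -τ) x := by
    intro t
    have hpos : 0 < Jac b X (-τ) (X t x) := Real.exp_pos _
    rw [hUτ, jac_add hb hX, ← hX.2.1, add_comm (-τ) t, neg_sub, sub_eq_add_neg, Real.exp_add,
      Real.exp_log hpos]
    ring
  simp_rw [key]
  exact lintegral_add_right_eq_self
    (fun t => ENNReal.ofReal (Real.exp (-(U0 (X t x))) * Jac b X t x)) (-τ)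
end
end
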